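/- For every ε > 0 there exists K > 0 such that for all k ∈ ℂ with |k| ≥ K and all x ∈ [0,ℓ] one has |c(x,k) − cos(kx) − (sin(kx)/k)·(1/2)∫₀ˣ q(t) dt − (cos(kx)/k²)·[ (1/4)(q(x) − q(0)) − (1/8)(∫₀ˣ q(t) dt)² ]| ≤ ε · e^{|Im k| x} / |k|². -/

import Mathlib

open MeasureTheory intervalIntegral Real

lemma gl_norm_sin (z : ℂ) : ‖Complex.sin z‖ ≤ Real.exp |z.im| := by
  have h1 : ‖Complex.exp (-z * Complex.I)‖ ≤ Real.exp |z.im| := by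
    rw [Complex.norm_exp]
    apply Real.exp_le_exp.2
    simpa using le_abs_self z.im
  have h2 : ‖Complex.exp (z * Complex.I)‖ ≤ Real.exp |z.im| := by
    rw [Complex.norm_exp]
    apply Real.exp_le_exp.2
    simpa using neg_le_abs z.im
  rw [Complex.sin, norm_div, norm_mul, Complex.norm_I, Complex.norm_ofNat]
  have := norm_sub_le (Complex.exp (-z * Complex.I)) (Complex.exp (z * Complex.I))
  linarith

lemma gl_norm_cos (z : ℂ) : ‖Complex.cos z‖ ≤ Real.exp |z.im| := by
  have h1 : ‖Complex.exp (-z * Complex.I)‖ ≤ Real.exp |z.im| := by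
    rw [Complex.norm_exp]
    apply Real.exp_le_exp.2
    simpa using le_abs_self z.im
  have h2 : ‖Complex.exp (z * Complex.I)‖ ≤ Real.exp |z.im| := by
    rw [Complex.norm_exp]
    apply Real.exp_le_exp.2
    simpa using neg_le_abs z.im
  rw [Complex.cos, norm_div, Complex.norm_ofNat]
  have := norm_add_le (Complex.exp (z * Complex.I)) (Complex.exp (-z * Complex.I))
  linarith

lemma gl_im (k : ℂ) (x t : ℝ) (ht : 0 ≤ t) (htx : t ≤ x) :
    |(k * ((x : ℂ) - 2 * t)).im| ≤ |k.im| * x := by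
  have : (k * ((x : ℂ) - 2 * t)).im = k.im * (x - 2 * t) := by
    have : ((x : ℂ) - 2 * t) = ((x - 2 * t : ℝ) : ℂ) := by push_cast; ring
    rw [this, Complex.im_mul_ofReal]
  rw [this, abs_mul]
  gcongr
  rw [abs_le]; constructor <;> linarith

lemma gl_ibp (p G G' : ℝ → ℂ) (hp : Integrable p) (a : ℂ) (hG : ∀ t, HasDerivAt G (G' t) t)
    (hG' : Continuous G') (x : ℝ) (hx : 0 ≤ x) :
    ∫ t in (0 : ℝ)..x, G' t * (a + ∫ s in (0 : ℝ)..t, p s)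
      = G x * (a + ∫ s in (0 : ℝ)..x, p s) - G 0 * a - ∫ t in (0 : ℝ)..x, G t * p t := by
  have hGc : Continuous G := continuous_iff_continuousAt.2 fun t => (hG t).continuousAt
  have hpc : Continuous fun t : ℝ => ∫ s in (0 : ℝ)..t, p s :=
    intervalIntegral.continuous_primitive (fun _ _ => hp.intervalIntegrable) 0
  have key : ∫ t in (0 : ℝ)..x, G' t * (∫ s in (0 : ℝ)..t, p s)
      = ∫ s in (0 : ℝ)..x, (G x - G s) * p s := by
    have hI : Integrable (Function.uncurry fun t s : ℝ =>
        ({z : ℝ × ℝ | z.2 ≤ z.1}.indicator (fun z => G' z.1 * p z.2)) (t, s))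
        ((volume.restrict (Set.Ioc 0 x)).prod (volume.restrict (Set.Ioc 0 x))) := by
      have h1 : Integrable G' (volume.restrict (Set.Ioc 0 x)) :=
        (hG'.integrableOn_Icc (a := 0) (b := x)).mono_set Set.Ioc_subset_Icc_self
      have h2 := h1.mul_prod (hp.restrict (s := Set.Ioc 0 x))
      exact h2.indicator (measurableSet_le measurable_snd measurable_fst)
    have := integral_integral_swap hI
    rw [intervalIntegral.integral_of_le hx, intervalIntegral.integral_of_le hx]
    convert this using 1
    · apply setIntegral_congr_fun measurableSet_Ioc
      intro t ht
      have h3 : ∀ s, ({z : ℝ × ℝ | z.2 ≤ z.1}.indicator (fun z => G' z.1 * p z.2)) (t, s)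
          = (Set.Iic t).indicator (fun s => G' t * p s) s := by
        intro s; simp [Set.indicator]
      simp only [h3]
      rw [setIntegral_indicator measurableSet_Iic, intervalIntegral.integral_of_le ht.1.le,
        ← MeasureTheory.integral_const_mul]
      congr 2
      ext s; simp only [Set.mem_Ioc, Set.mem_inter_iff, Set.mem_Iic]
      have := ht.2
      constructor
      · rintro ⟨h, h'⟩; exact ⟨⟨h, h'.trans this⟩, h'⟩
      · rintro ⟨⟨h, _⟩, h'⟩; exact ⟨h, h'⟩
    · apply setIntegral_congr_fun measurableSet_Ioc
      intro s hs
      have h3 : ∀ t, ({z : ℝ × ℝ | z.2 ≤ z.1}.indicator (fun z => G' z.1 * p z.2)) (t, s)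
          = (Set.Ici s).indicator (fun t => G' t * p s) t := by
        intro t; simp [Set.indicator]
      simp only [h3]
      rw [setIntegral_indicator measurableSet_Ici]
      have h4 : Set.Ioc 0 x ∩ Set.Ici s = Set.Icc s x := by
        ext t; simp only [Set.mem_Ioc, Set.mem_inter_iff, Set.mem_Ici, Set.mem_Icc]
        have := hs.1
        constructor
        · rintro ⟨⟨_, h⟩, h'⟩; exact ⟨h', h⟩
        · rintro ⟨h, h'⟩; exact ⟨⟨this.trans_le h, h'⟩, h⟩
      rw [h4, MeasureTheory.integral_mul_const, integral_Icc_eq_integral_Ioc,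
        ← intervalIntegral.integral_of_le hs.2,
        intervalIntegral.integral_eq_sub_of_hasDerivAt (fun t _ => hG t)
          (hG'.intervalIntegrable _ _)]
  have e1 : ∫ t in (0 : ℝ)..x, G' t * (a + ∫ s in (0 : ℝ)..t, p s)
      = (∫ t in (0 : ℝ)..x, G' t * a) + ∫ t in (0 : ℝ)..x, G' t * (∫ s in (0 : ℝ)..t, p s) := by
    rw [← intervalIntegral.integral_add]
    · simp only [mul_add]
    · exact (hG'.mul continuous_const).intervalIntegrable _ _
    · exact (hG'.mul hpc).intervalIntegrable _ _
  have e2 : ∫ s in (0 : ℝ)..x, (G x - G s) * p s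
      = G x * (∫ s in (0 : ℝ)..x, p s) - ∫ t in (0 : ℝ)..x, G t * p t := by
    rw [← intervalIntegral.integral_const_mul, ← intervalIntegral.integral_sub]
    · simp only [sub_mul]
    · exact hp.intervalIntegrable.const_mul _
    · exact hp.intervalIntegrable.continuousOn_mul hGc.continuousOn
  rw [e1, key, e2, intervalIntegral.integral_mul_const,
    intervalIntegral.integral_eq_sub_of_hasDerivAt (fun t _ => hG t)
          (hG'.intervalIntegrable _ _)]
  ring

lemma gl_RL (f : ℝ → ℂ) (hf : Integrable f) (ℓ : ℝ) (ε : ℝ) (hε : 0 < ε) :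
    ∃ K > 0, ∀ k : ℂ, K ≤ ‖k‖ → ∀ x ∈ Set.Icc (0 : ℝ) ℓ,
      ‖∫ t in (0 : ℝ)..x, Complex.cos (k * ((x : ℂ) - 2 * t)) * f t‖
        ≤ ε * Real.exp (|k.im| * x) := by
  obtain ⟨g, hg1, hg2, hg3⟩ := MemLp.exist_eLpNorm_sub_le ENNReal.one_ne_top le_rfl
    (memLp_one_iff_integrable.2 hf) (half_pos hε)
  have hgi : Integrable g := hg2.continuous.integrable_of_hasCompactSupport hg1
  have hfg : ∫ t, ‖f t - g t‖ ≤ ε / 2 := by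
    have h := hf.sub hgi
    rw [← memLp_one_iff_integrable] at h
    have h2 : ∫ t, ‖f t - g t‖ = (eLpNorm (f - g) 1 volume).toReal := by
      rw [eLpNorm_one_eq_lintegral_enorm, ← integral_norm_eq_lintegral_enorm h.1]
      rfl
    rw [h2]
    exact ENNReal.toReal_le_of_le_ofReal (half_pos hε).le hg3
  obtain ⟨M, hM⟩ := hg1.exists_bound_of_continuous hg2.continuous
  have hg'c : Continuous (deriv g) := hg2.continuous_deriv (by simp)
  obtain ⟨M', hM'⟩ := (hg1.deriv (𝕜 := ℝ)).exists_bound_of_continuous hg'c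
  have hM0 : 0 ≤ M := (norm_nonneg _).trans (hM 0)
  have hM0' : 0 ≤ M' := (norm_nonneg _).trans (hM' 0)
  refine ⟨(2 * M + M' * |ℓ|) / ε + 1, by positivity, fun k hk x hx => ?_⟩
  have hkpos : 0 < ‖k‖ := lt_of_lt_of_le (by positivity) hk
  have hk0 : k ≠ 0 := norm_pos_iff.1 hkpos
  set E := Real.exp (|k.im| * x) with hE
  have hEpos : 0 < E := Real.exp_pos _
  have hcosc : Continuous fun t : ℝ => Complex.cos (k * ((x : ℂ) - 2 * t)) := by fun_prop
  have hsinc : Continuous fun t : ℝ => Complex.sin (k * ((x : ℂ) - 2 * t)) := by fun_prop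
  have hcos : ∀ t ∈ Set.Icc 0 x, ‖Complex.cos (k * ((x : ℂ) - 2 * t))‖ ≤ E := fun t ht =>
    (gl_norm_cos _).trans (Real.exp_le_exp.2 (gl_im k x t ht.1 ht.2))
  have hsin : ∀ t ∈ Set.Icc 0 x, ‖Complex.sin (k * ((x : ℂ) - 2 * t))‖ ≤ E := fun t ht =>
    (gl_norm_sin _).trans (Real.exp_le_exp.2 (gl_im k x t ht.1 ht.2))
  have split : ∫ t in (0 : ℝ)..x, Complex.cos (k * ((x : ℂ) - 2 * t)) * f t
      = (∫ t in (0 : ℝ)..x, Complex.cos (k * ((x : ℂ) - 2 * t)) * (f t - g t))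
        + ∫ t in (0 : ℝ)..x, Complex.cos (k * ((x : ℂ) - 2 * t)) * g t := by
    rw [← intervalIntegral.integral_add]
    · congr 1; ext t; ring
    · exact (hf.sub hgi).intervalIntegrable.continuousOn_mul hcosc.continuousOn
    · exact hgi.intervalIntegrable.continuousOn_mul hcosc.continuousOn
  have b1 : ‖∫ t in (0 : ℝ)..x, Complex.cos (k * ((x : ℂ) - 2 * t)) * (f t - g t)‖
      ≤ E * (ε / 2) := by
    have hn : Integrable fun t => ‖f t - g t‖ := (hf.sub hgi).norm
    calc _ ≤ ∫ t in (0 : ℝ)..x, E * ‖f t - g t‖ := by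
          apply intervalIntegral.norm_integral_le_of_norm_le hx.1
          · refine Filter.Eventually.of_forall fun t ht => ?_
            rw [norm_mul]
            gcongr
            exact hcos t ⟨ht.1.le, ht.2⟩
          · exact hn.intervalIntegrable.const_mul _
      _ = E * ∫ t in (0 : ℝ)..x, ‖f t - g t‖ := intervalIntegral.integral_const_mul _ _
      _ ≤ E * (ε / 2) := by
          gcongr
          refine le_trans ?_ hfg
          rw [intervalIntegral.integral_of_le hx.1]
          exact setIntegral_le_integral hn (Filter.Eventually.of_forall fun t => norm_nonneg _)
  have ibp : ∫ t in (0 : ℝ)..x, Complex.cos (k * ((x : ℂ) - 2 * t)) * g t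
      = (1 / (2 * k)) * (-(Complex.sin (k * ((x : ℂ) - 2 * x)) * g x)
        + Complex.sin (k * ((x : ℂ) - 2 * (0 : ℝ))) * g 0
        + ∫ t in (0 : ℝ)..x, Complex.sin (k * ((x : ℂ) - 2 * t)) * deriv g t) := by
    have hd : ∀ t : ℝ, HasDerivAt (fun t : ℝ => -(1 / (2 * k)) * Complex.sin (k * ((x : ℂ) - 2 * t)))
        (Complex.cos (k * ((x : ℂ) - 2 * t))) t := by
      intro t
      have h1 : HasDerivAt (fun t : ℝ => k * ((x : ℂ) - 2 * t)) (k * (-(2 * 1))) t :=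
        (((Complex.ofRealCLM.hasDerivAt (x := t)).const_mul (2 : ℂ)).const_sub (x : ℂ)).const_mul k
      have h2 := ((Complex.hasDerivAt_sin (k * ((x : ℂ) - 2 * t))).comp t h1).const_mul (-(1 / (2 * k)))
      refine HasDerivAt.congr_deriv h2 ?_
      field_simp
    have hgd : ∀ t, HasDerivAt g (deriv g t) t := fun t =>
      ((hg2.differentiable (by simp)) t).hasDerivAt
    have := intervalIntegral.integral_deriv_mul_eq_sub (a := 0) (b := x)
      (fun t _ => hd t) (fun t _ => hgd t) (hcosc.intervalIntegrable _ _)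
      (hg'c.intervalIntegrable _ _)
    rw [intervalIntegral.integral_add] at this
    · have h5 : ∫ t in (0 : ℝ)..x, -(1 / (2 * k)) * Complex.sin (k * ((x : ℂ) - 2 * t)) * deriv g t
          = -(1 / (2 * k)) * ∫ t in (0 : ℝ)..x, Complex.sin (k * ((x : ℂ) - 2 * t)) * deriv g t := by
        rw [← intervalIntegral.integral_const_mul]; simp only [mul_assoc]
      rw [h5] at this
      linear_combination this
    · exact (hcosc.mul hg2.continuous).intervalIntegrable _ _
    · exact ((continuous_const.mul hsinc).mul hg'c).intervalIntegrable _ _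
  have b3 : ‖∫ t in (0 : ℝ)..x, Complex.sin (k * ((x : ℂ) - 2 * t)) * deriv g t‖
      ≤ E * M' * |ℓ| := by
    have := intervalIntegral.norm_integral_le_of_norm_le_const (a := 0) (b := x) (C := E * M')
      (f := fun t : ℝ => Complex.sin (k * ((x : ℂ) - 2 * t)) * deriv g t) (by
        intro t ht
        rw [Set.uIoc_of_le hx.1] at ht
        rw [norm_mul]
        gcongr
        · exact hsin t ⟨ht.1.le, ht.2⟩
        · exact hM' t)
    refine this.trans ?_
    rw [sub_zero, abs_of_nonneg hx.1]
    gcongr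
    exact hx.2.trans (le_abs_self _)
  have b2 : ‖∫ t in (0 : ℝ)..x, Complex.cos (k * ((x : ℂ) - 2 * t)) * g t‖ ≤ E * (ε / 2) := by
    rw [ibp, norm_mul]
    have h6 : ‖(1 / (2 * k))‖ = 1 / (2 * ‖k‖) := by simp
    rw [h6]
    have s1 : ‖Complex.sin (k * ((x : ℂ) - 2 * x)) * g x‖ ≤ E * M := by
      rw [norm_mul]
      gcongr
      · exact hsin x ⟨hx.1, le_rfl⟩
      · exact hM x
    have s2 : ‖Complex.sin (k * ((x : ℂ) - 2 * (0 : ℝ))) * g 0‖ ≤ E * M := by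
      rw [norm_mul]
      gcongr
      · exact hsin 0 ⟨le_rfl, hx.1⟩
      · exact hM 0
    have s3 := norm_add₃_le (a := -(Complex.sin (k * ((x : ℂ) - 2 * x)) * g x))
      (b := Complex.sin (k * ((x : ℂ) - 2 * (0 : ℝ))) * g 0)
      (c := ∫ t in (0 : ℝ)..x, Complex.sin (k * ((x : ℂ) - 2 * t)) * deriv g t)
    rw [norm_neg] at s3
    have s4 : 2 * M + M' * |ℓ| ≤ ε * ‖k‖ := by
      have : (2 * M + M' * |ℓ|) / ε ≤ ‖k‖ := by linarith
      rw [div_le_iff₀ hε] at this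
      linarith
    rw [div_mul_eq_mul_div, one_mul, div_le_iff₀ (by positivity)]
    have s5 := mul_le_mul_of_nonneg_left s4 hEpos.le
    nlinarith
  rw [split]
  refine (norm_add_le _ _).trans ?_
  linarith

lemma gl_identity (p q Q : ℝ → ℂ) (a : ℂ) (hp : Integrable p)
    (hq : ∀ t, q t = a + ∫ s in (0 : ℝ)..t, p s) (hQ : ∀ t, Q t = ∫ s in (0 : ℝ)..t, q s)
    (hqc : Continuous q) (k : ℂ) (hk : k ≠ 0) (x : ℝ) (hx : 0 ≤ x) :
    ∫ t in (0 : ℝ)..x, (Complex.sin (k * ((x : ℂ) - t)) / k) * q t *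
        (Complex.cos (k * t) + (Complex.sin (k * t) / k) * ((1 / 2 : ℂ) * Q t))
      = (Complex.sin (k * x) / k) * ((1 / 2 : ℂ) * Q x)
        + (Complex.cos (k * x) / k ^ 2) *
              ((1 / 4 : ℂ) * (q x - q 0) - (1 / 8 : ℂ) * (Q x) ^ 2)
        + (1 / (4 * k ^ 2)) * ((∫ t in (0 : ℝ)..x, Complex.cos (k * ((x : ℂ) - 2 * t)) * (q t * Q t))
          - ∫ t in (0 : ℝ)..x, Complex.cos (k * ((x : ℂ) - 2 * t)) * p t) := by
  have hQd : ∀ t, HasDerivAt Q (q t) t := by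
    intro t
    have : Q = fun t => ∫ s in (0 : ℝ)..t, q s := funext hQ
    rw [this]
    exact hqc.integral_hasStrictDerivAt 0 t |>.hasDerivAt
  have hQc : Continuous Q := continuous_iff_continuousAt.2 fun t => (hQd t).continuousAt
  have hq0 : q 0 = a := by simp [hq]
  have hQ0 : Q 0 = 0 := by simp [hQ]
  have hcosc : Continuous fun t : ℝ => Complex.cos (k * ((x : ℂ) - 2 * t)) := by fun_prop
  have hsinc : Continuous fun t : ℝ => Complex.sin (k * ((x : ℂ) - 2 * t)) := by fun_prop
  have pw : ∀ t : ℝ, (Complex.sin (k * ((x : ℂ) - t)) / k) * q t *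
        (Complex.cos (k * t) + (Complex.sin (k * t) / k) * ((1 / 2 : ℂ) * Q t))
      = (Complex.sin (k * x) / (2 * k)) * q t
        + (1 / (2 * k)) * (Complex.sin (k * ((x : ℂ) - 2 * t)) * q t)
        + (1 / (4 * k ^ 2)) * (Complex.cos (k * ((x : ℂ) - 2 * t)) * (q t * Q t))
        - (Complex.cos (k * x) / (4 * k ^ 2)) * (q t * Q t) := by
    intro t
    have e1 : k * (x : ℂ) = k * ((x : ℂ) - t) + k * t := by ring
    have e2 : k * ((x : ℂ) - 2 * t) = k * ((x : ℂ) - t) - k * t := by ring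
    rw [e1, e2, Complex.sin_add, Complex.sin_sub, Complex.cos_add, Complex.cos_sub]
    field_simp
    ring
  have i1 : ∫ t in (0 : ℝ)..x, Complex.sin (k * ((x : ℂ) - 2 * t)) * q t
      = (1 / (2 * k)) * (Complex.cos (k * x) * (q x - q 0)
        - ∫ t in (0 : ℝ)..x, Complex.cos (k * ((x : ℂ) - 2 * t)) * p t) := by
    have hd : ∀ t : ℝ, HasDerivAt (fun t : ℝ => (1 / (2 * k)) * Complex.cos (k * ((x : ℂ) - 2 * t)))
        (Complex.sin (k * ((x : ℂ) - 2 * t))) t := by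
      intro t
      have h1 : HasDerivAt (fun t : ℝ => k * ((x : ℂ) - 2 * t)) (k * (-(2 * 1))) t :=
        (((Complex.ofRealCLM.hasDerivAt (x := t)).const_mul (2 : ℂ)).const_sub (x : ℂ)).const_mul k
      have h2 := ((Complex.hasDerivAt_cos (k * ((x : ℂ) - 2 * t))).comp t h1).const_mul (1 / (2 * k))
      refine HasDerivAt.congr_deriv h2 ?_
      field_simp
    have := gl_ibp p _ _ hp a hd hsinc x hx
    simp only [← hq] at this
    rw [this, hq0]
    have h5 : ∫ t in (0 : ℝ)..x, (1 / (2 * k)) * Complex.cos (k * ((x : ℂ) - 2 * t)) * p t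
        = (1 / (2 * k)) * ∫ t in (0 : ℝ)..x, Complex.cos (k * ((x : ℂ) - 2 * t)) * p t := by
      rw [← intervalIntegral.integral_const_mul]; simp only [mul_assoc]
    rw [h5]
    have e3 : k * ((x : ℂ) - 2 * x) = -(k * x) := by ring
    have e4 : k * ((x : ℂ) - 2 * (0 : ℝ)) = k * x := by simp
    rw [e3, e4, Complex.cos_neg]
    ring
  have i2 : ∫ t in (0 : ℝ)..x, q t * Q t = (1 / 2) * Q x ^ 2 := by
    have := intervalIntegral.integral_deriv_mul_eq_sub (a := 0) (b := x)
      (fun t _ => hQd t) (fun t _ => hQd t) (hqc.intervalIntegrable _ _)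
      (hqc.intervalIntegrable _ _)
    have h7 : ∀ t, q t * Q t + Q t * q t = 2 * (q t * Q t) := fun t => by ring
    simp only [h7, hQ0] at this
    rw [intervalIntegral.integral_const_mul] at this
    linear_combination this / 2
  simp only [pw]
  rw [intervalIntegral.integral_sub, intervalIntegral.integral_add, intervalIntegral.integral_add,
    intervalIntegral.integral_const_mul, intervalIntegral.integral_const_mul,
    intervalIntegral.integral_const_mul, intervalIntegral.integral_const_mul, i1, i2, ← hQ]
  · field_simp
    ring
  all_goals exact Continuous.intervalIntegrable (by fun_prop) _ _

lemma gl_int_bound (q r : ℝ → ℂ) (ℓ M S : ℝ) (hM : ∀ t ∈ Set.Icc 0 ℓ, ‖q t‖ ≤ M) (hM0 : 0 ≤ M)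
    (hS : 0 ≤ S)
    (k : ℂ) (hr : ∀ t ∈ Set.Icc 0 ℓ, ‖r t‖ ≤ S * Real.exp (|k.im| * t)) (x : ℝ)
    (hx : x ∈ Set.Icc 0 ℓ) :
    ‖∫ t in (0 : ℝ)..x, (Complex.sin (k * ((x : ℂ) - t)) / k) * q t * r t‖
      ≤ (M * ℓ / ‖k‖) * S * Real.exp (|k.im| * x) := by
  have := intervalIntegral.norm_integral_le_of_norm_le_const (a := 0) (b := x)
      (C := M / ‖k‖ * S * Real.exp (|k.im| * x))
      (f := fun t : ℝ => (Complex.sin (k * ((x : ℂ) - t)) / k) * q t * r t) (by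
        intro t ht
        rw [Set.uIoc_of_le hx.1] at ht
        have htI : t ∈ Set.Icc 0 ℓ := ⟨ht.1.le, ht.2.trans hx.2⟩
        have h1 : ‖Complex.sin (k * ((x : ℂ) - t))‖ ≤ Real.exp (|k.im| * (x - t)) := by
          refine (gl_norm_sin _).trans (Real.exp_le_exp.2 ?_)
          rw [← Complex.ofReal_sub, Complex.im_mul_ofReal, abs_mul,
            abs_of_nonneg (sub_nonneg.2 ht.2)]
        have h2 : Real.exp (|k.im| * x) = Real.exp (|k.im| * (x - t)) * Real.exp (|k.im| * t) := by
          rw [← Real.exp_add]; congr 1; ring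
        rw [norm_mul, norm_mul, norm_div, h2]
        calc _ ≤ Real.exp (|k.im| * (x - t)) / ‖k‖ * M * (S * Real.exp (|k.im| * t)) := by
              gcongr
              · exact hM t htI
              · exact hr t htI
          _ = _ := by ring)
  refine this.trans ?_
  rw [sub_zero, abs_of_nonneg hx.1]
  calc _ ≤ M / ‖k‖ * S * Real.exp (|k.im| * x) * ℓ := by
        gcongr
        exact hx.2
    _ = _ := by ring

lemma gl_contr (q r b : ℝ → ℂ) (ℓ M B : ℝ) (hℓ : 0 < ℓ)
    (hM : ∀ t ∈ Set.Icc 0 ℓ, ‖q t‖ ≤ M) (hM0 : 0 ≤ M)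
    (k : ℂ) (hk : 0 < ‖k‖) (hkM : 2 * M * ℓ ≤ ‖k‖) (hrc : ContinuousOn r (Set.Icc 0 ℓ))
    (hb : ∀ t ∈ Set.Icc 0 ℓ, ‖b t‖ ≤ B * Real.exp (|k.im| * t))
    (hr : ∀ x ∈ Set.Icc 0 ℓ, r x = b x +
      ∫ t in (0 : ℝ)..x, (Complex.sin (k * ((x : ℂ) - t)) / k) * q t * r t) :
    ∀ t ∈ Set.Icc 0 ℓ, ‖r t‖ ≤ 2 * B * Real.exp (|k.im| * t) := by
  have hu : ContinuousOn (fun t => ‖r t‖ * Real.exp (-(|k.im| * t))) (Set.Icc 0 ℓ) :=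
    hrc.norm.mul (by fun_prop)
  obtain ⟨y, hy, hmax⟩ := isCompact_Icc.exists_isMaxOn ⟨0, Set.left_mem_Icc.2 hℓ.le⟩ hu
  set S := ‖r y‖ * Real.exp (-(|k.im| * y)) with hSdef
  have hS : 0 ≤ S := by positivity
  have hrS : ∀ t ∈ Set.Icc 0 ℓ, ‖r t‖ ≤ S * Real.exp (|k.im| * t) := by
    intro t ht
    have h := hmax ht
    simp only [Set.mem_ofPred_eq] at h
    rw [Real.exp_neg, ← div_eq_mul_inv, div_le_iff₀ (Real.exp_pos _)] at h
    exact h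
  have h1 := gl_int_bound q r ℓ M S hM hM0 hS k hrS y hy
  have h2 : M * ℓ / ‖k‖ ≤ 1 / 2 := by
    rw [div_le_iff₀ hk]; linarith
  have h3 : ‖r y‖ ≤ (B + S / 2) * Real.exp (|k.im| * y) := by
    rw [hr y hy]
    refine (norm_add_le _ _).trans ?_
    have := hb y hy
    have h4 : (M * ℓ / ‖k‖) * S * Real.exp (|k.im| * y) ≤ 1 / 2 * S * Real.exp (|k.im| * y) := by
      gcongr
    linarith
  have h5 : S ≤ B + S / 2 := by
    rw [hSdef, Real.exp_neg, ← div_eq_mul_inv, div_le_iff₀ (Real.exp_pos _)]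
    rw [Real.exp_neg, ← div_eq_mul_inv] at hSdef
    rw [← hSdef]
    exact h3
  intro t ht
  refine (hrS t ht).trans ?_
  gcongr
  linarith

lemma gl_core (ℓ : ℝ) (hℓ : 0 < ℓ) (p q Q : ℝ → ℂ) (a : ℂ) (hp : Integrable p)
    (hq : ∀ t, q t = a + ∫ s in (0 : ℝ)..t, p s) (hQ : ∀ t, Q t = ∫ s in (0 : ℝ)..t, q s)
    (c : ℂ → ℝ → ℂ)
    (hccont : ∀ k : ℂ, k ≠ 0 → ContinuousOn (c k) (Set.Icc 0 ℓ))
    (hc : ∀ k : ℂ, k ≠ 0 → ∀ x ∈ Set.Icc (0 : ℝ) ℓ,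
      c k x = Complex.cos (k * x) +
        ∫ t in (0 : ℝ)..x, (Complex.sin (k * ((x : ℂ) - t)) / k) * q t * c k t) :
    ∀ ε > 0, ∃ K > 0, ∀ k : ℂ, K ≤ ‖k‖ → ∀ x ∈ Set.Icc (0 : ℝ) ℓ,
      ‖c k x - Complex.cos (k * x)
          - (Complex.sin (k * x) / k) * ((1 / 2 : ℂ) * Q x)
          - (Complex.cos (k * x) / k ^ 2) *
              ((1 / 4 : ℂ) * (q x - q 0) - (1 / 8 : ℂ) * (Q x) ^ 2)‖
        ≤ ε * Real.exp (|k.im| * x) / ‖k‖ ^ 2 := by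
  intro ε hε
  have hqc : Continuous q := by
    have : q = fun t => a + ∫ s in (0 : ℝ)..t, p s := funext hq
    rw [this]
    exact continuous_const.add
      (intervalIntegral.continuous_primitive (fun _ _ => hp.intervalIntegrable) 0)
  have hQc : Continuous Q := by
    have : Q = fun t => ∫ s in (0 : ℝ)..t, q s := funext hQ
    rw [this]
    exact intervalIntegral.continuous_primitive (fun _ _ => hqc.intervalIntegrable _ _) 0
  obtain ⟨M, hM⟩ := isCompact_Icc.exists_bound_of_continuousOn (hqc.continuousOn (s := Set.Icc 0 ℓ))
  have hM0 : 0 ≤ M := (norm_nonneg _).trans (hM 0 (Set.left_mem_Icc.2 hℓ.le))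
  let W : ℝ → ℂ := fun x => (1 / 4 : ℂ) * (q x - q 0) - (1 / 8 : ℂ) * (Q x) ^ 2
  have hWc : Continuous W := by fun_prop
  obtain ⟨N, hN⟩ := isCompact_Icc.exists_bound_of_continuousOn (hWc.continuousOn (s := Set.Icc 0 ℓ))
  have hN0 : 0 ≤ N := (norm_nonneg _).trans (hN 0 (Set.left_mem_Icc.2 hℓ.le))
  obtain ⟨K1, hK1, hRL1⟩ := gl_RL p hp ℓ ε hε
  obtain ⟨K2, hK2, hRL2⟩ := gl_RL ((Set.Ioc 0 ℓ).indicator fun t => q t * Q t)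
    (((hqc.mul hQc).integrableOn_Icc.mono_set Set.Ioc_subset_Icc_self).integrable_indicator
      measurableSet_Ioc) ℓ ε hε
  set T := 4 * M * ℓ * (N + ε) / ε with hT
  have hT0 : 0 ≤ T := by positivity
  refine ⟨K1 + K2 + 2 * M * ℓ + T, by positivity, fun k hk => ?_⟩
  have hMl : 0 ≤ 2 * M * ℓ := by positivity
  have hkpos : 0 < ‖k‖ := by linarith
  have hk0 : k ≠ 0 := norm_pos_iff.1 hkpos
  let A : ℝ → ℂ := fun t =>
    Complex.cos (k * t) + (Complex.sin (k * t) / k) * ((1 / 2 : ℂ) * Q t)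
  have hAc : Continuous A := by fun_prop
  let D : ℝ → ℂ := fun x => (1 / (4 * k ^ 2)) *
    ((∫ t in (0 : ℝ)..x, Complex.cos (k * ((x : ℂ) - 2 * t)) * (q t * Q t))
          - ∫ t in (0 : ℝ)..x, Complex.cos (k * ((x : ℂ) - 2 * t)) * p t)
  let r : ℝ → ℂ := fun x => c k x - A x
  have hrc : ContinuousOn r (Set.Icc 0 ℓ) := (hccont k hk0).sub hAc.continuousOn
  have hr : ∀ x ∈ Set.Icc 0 ℓ, r x = ((Complex.cos (k * x) / k ^ 2) * W x + D x) +
      ∫ t in (0 : ℝ)..x, (Complex.sin (k * ((x : ℂ) - t)) / k) * q t * r t := by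
    intro x hx
    have h1 := gl_identity p q Q a hp hq hQ hqc k hk0 x hx.1
    have h2 : ∫ t in (0 : ℝ)..x, (Complex.sin (k * ((x : ℂ) - t)) / k) * q t * c k t
        = (∫ t in (0 : ℝ)..x, (Complex.sin (k * ((x : ℂ) - t)) / k) * q t * A t)
          + ∫ t in (0 : ℝ)..x, (Complex.sin (k * ((x : ℂ) - t)) / k) * q t * r t := by
      rw [← intervalIntegral.integral_add]
      · congr 1; ext t; simp only [r]; ring
      · exact Continuous.intervalIntegrable (by fun_prop) _ _
      · apply ContinuousOn.intervalIntegrable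
        rw [Set.uIcc_of_le hx.1]
        exact ContinuousOn.mul (Continuous.continuousOn (by fun_prop))
          (hrc.mono (Set.Icc_subset_Icc_right hx.2))
    have h3 := hc k hk0 x hx
    rw [h2, h1] at h3
    simp only [r, W, D, A] at h3 ⊢
    linear_combination h3
  have hD : ∀ x ∈ Set.Icc 0 ℓ, ‖D x‖ ≤ (ε / 2 / ‖k‖ ^ 2) * Real.exp (|k.im| * x) := by
    intro x hx
    have b1 := hRL1 k (by linarith) x hx
    have b2 := hRL2 k (by linarith) x hx
    have h4 : ∫ t in (0 : ℝ)..x, Complex.cos (k * ((x : ℂ) - 2 * t)) *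
        ((Set.Ioc 0 ℓ).indicator (fun t => q t * Q t) t)
        = ∫ t in (0 : ℝ)..x, Complex.cos (k * ((x : ℂ) - 2 * t)) * (q t * Q t) := by
      rw [intervalIntegral.integral_of_le hx.1, intervalIntegral.integral_of_le hx.1]
      apply setIntegral_congr_fun measurableSet_Ioc
      intro t ht
      have : t ∈ Set.Ioc 0 ℓ := ⟨ht.1, ht.2.trans hx.2⟩
      simp only [Set.indicator_of_mem this]
    rw [h4] at b2
    simp only [D]
    rw [norm_mul]
    have h5 : ‖1 / (4 * k ^ 2)‖ = 1 / (4 * ‖k‖ ^ 2) := by simp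
    rw [h5]
    calc _ ≤ 1 / (4 * ‖k‖ ^ 2) * (ε * Real.exp (|k.im| * x) + ε * Real.exp (|k.im| * x)) := by
          gcongr
          exact (norm_sub_le _ _).trans (add_le_add b2 b1)
      _ = _ := by field_simp; ring
  have hb : ∀ x ∈ Set.Icc 0 ℓ, ‖(Complex.cos (k * x) / k ^ 2) * W x + D x‖
      ≤ ((N + ε) / ‖k‖ ^ 2) * Real.exp (|k.im| * x) := by
    intro x hx
    refine (norm_add_le _ _).trans ?_
    have h6 : ‖(Complex.cos (k * x) / k ^ 2) * W x‖ ≤ N / ‖k‖ ^ 2 * Real.exp (|k.im| * x) := by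
      rw [norm_mul, norm_div, norm_pow]
      have h7 : ‖Complex.cos (k * x)‖ ≤ Real.exp (|k.im| * x) := by
        refine (gl_norm_cos _).trans (Real.exp_le_exp.2 ?_)
        rw [Complex.im_mul_ofReal, abs_mul, abs_of_nonneg hx.1]
      calc _ ≤ Real.exp (|k.im| * x) / ‖k‖ ^ 2 * N := by
            gcongr
            exact hN x hx
        _ = _ := by ring
    have h8 : (ε / 2 / ‖k‖ ^ 2) * Real.exp (|k.im| * x)
        ≤ (ε / ‖k‖ ^ 2) * Real.exp (|k.im| * x) := by
      gcongr; linarith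
    have := hD x hx
    rw [add_div, add_mul]
    linarith
  have hrb := gl_contr q r _ ℓ M _ hℓ hM hM0 k hkpos (by linarith) hrc hb hr
  intro x hx
  have h9 := gl_int_bound q r ℓ M _ hM hM0 (by positivity) k hrb x hx
  have h10 : c k x - Complex.cos (k * x) - (Complex.sin (k * x) / k) * ((1 / 2 : ℂ) * Q x)
      - (Complex.cos (k * x) / k ^ 2) *
              ((1 / 4 : ℂ) * (q x - q 0) - (1 / 8 : ℂ) * (Q x) ^ 2)
      = D x + ∫ t in (0 : ℝ)..x, (Complex.sin (k * ((x : ℂ) - t)) / k) * q t * r t := by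
    have := hr x hx
    simp only [r, W, A] at this ⊢
    linear_combination this
  rw [h10]
  refine (norm_add_le _ _).trans ?_
  have h11 : M * ℓ / ‖k‖ * (2 * ((N + ε) / ‖k‖ ^ 2)) * Real.exp (|k.im| * x)
      ≤ (ε / 2 / ‖k‖ ^ 2) * Real.exp (|k.im| * x) := by
    gcongr ?_ * _
    have h12 : T ≤ ‖k‖ := by linarith
    rw [hT, div_le_iff₀ hε] at h12
    rw [div_mul_eq_mul_div, div_le_iff₀ hkpos]
    have : ε / 2 / ‖k‖ ^ 2 * ‖k‖ = (‖k‖ * ε / 2) / ‖k‖ ^ 2 := by ring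
    rw [this]
    have : M * ℓ * (2 * ((N + ε) / ‖k‖ ^ 2)) = (2 * M * ℓ * (N + ε)) / ‖k‖ ^ 2 := by ring
    rw [this]
    gcongr
    linarith
  have := hD x hx
  have h13 : ε * Real.exp (|k.im| * x) / ‖k‖ ^ 2 = (ε / 2 / ‖k‖ ^ 2) * Real.exp (|k.im| * x)
      + (ε / 2 / ‖k‖ ^ 2) * Real.exp (|k.im| * x) := by ring
  rw [h13]
  linarith

/-- Asymptotics of the solution `c(·, k)` of the Volterra integral equation
`c(x,k) = cos(kx) + ∫₀ˣ (sin(k(x−t))/k) q(t) c(t,k) dt` on `[0, ℓ]`, where the potential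
`q` is absolutely continuous with derivative `q' ∈ L¹((0,ℓ))`. -/
theorem gelfand_levitan_c_asymptotics
    (ℓ : ℝ) (hℓ : 0 < ℓ) (q q' : ℝ → ℝ)
    (hq' : IntervalIntegrable q' volume 0 ℓ)
    (hq : ∀ x ∈ Set.Icc (0 : ℝ) ℓ, q x = q 0 + ∫ t in (0 : ℝ)..x, q' t)
    (c : ℂ → ℝ → ℂ)
    (hccont : ∀ k : ℂ, k ≠ 0 → ContinuousOn (c k) (Set.Icc 0 ℓ))
    (hc : ∀ k : ℂ, k ≠ 0 → ∀ x ∈ Set.Icc (0 : ℝ) ℓ,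
      c k x = Complex.cos (k * x) +
        ∫ t in (0 : ℝ)..x, (Complex.sin (k * ((x : ℂ) - t)) / k) * (q t : ℂ) * c k t) :
    ∀ ε > 0, ∃ K > 0, ∀ k : ℂ, K ≤ ‖k‖ → ∀ x ∈ Set.Icc (0 : ℝ) ℓ,
      ‖c k x - Complex.cos (k * x)
          - (Complex.sin (k * x) / k) * ((1 / 2 : ℂ) * ∫ t in (0 : ℝ)..x, (q t : ℂ))
          - (Complex.cos (k * x) / k ^ 2) *
              ((1 / 4 : ℂ) * ((q x : ℂ) - (q 0 : ℂ))
                - (1 / 8 : ℂ) * (∫ t in (0 : ℝ)..x, (q t : ℂ)) ^ 2)‖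
        ≤ ε * Real.exp (|k.im| * x) / ‖k‖ ^ 2 := by
  have hqi : IntegrableOn (fun t => (q' t : ℂ)) (Set.Ioc 0 ℓ) := by
    have := (intervalIntegrable_iff_integrableOn_Ioc_of_le hℓ.le).1 hq'
    exact this.ofReal
  let p : ℝ → ℂ := (Set.Ioc 0 ℓ).indicator fun t => (q' t : ℂ)
  have hp : Integrable p := hqi.integrable_indicator measurableSet_Ioc
  let qt : ℝ → ℂ := fun t => (q 0 : ℂ) + ∫ s in (0 : ℝ)..t, p s
  let Q : ℝ → ℂ := fun t => ∫ s in (0 : ℝ)..t, qt s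
  have hqt : ∀ x ∈ Set.Icc (0 : ℝ) ℓ, qt x = (q x : ℂ) := by
    intro x hx
    rw [hq x hx, Complex.ofReal_add, ← intervalIntegral.integral_ofReal]
    simp only [qt]
    congr 1
    rw [intervalIntegral.integral_of_le hx.1, intervalIntegral.integral_of_le hx.1]
    apply setIntegral_congr_fun measurableSet_Ioc
    intro t ht
    have : t ∈ Set.Ioc 0 ℓ := ⟨ht.1, ht.2.trans hx.2⟩
    simp only [p, Set.indicator_of_mem this]
  have hQ : ∀ x ∈ Set.Icc (0 : ℝ) ℓ, Q x = ∫ t in (0 : ℝ)..x, (q t : ℂ) := by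
    intro x hx
    apply intervalIntegral.integral_congr
    intro t ht
    rw [Set.uIcc_of_le hx.1] at ht
    exact hqt t ⟨ht.1, ht.2.trans hx.2⟩
  have hc2 : ∀ k : ℂ, k ≠ 0 → ∀ x ∈ Set.Icc (0 : ℝ) ℓ,
      c k x = Complex.cos (k * x) +
        ∫ t in (0 : ℝ)..x, (Complex.sin (k * ((x : ℂ) - t)) / k) * qt t * c k t := by
    intro k hk x hx
    rw [hc k hk x hx]
    congr 1
    apply intervalIntegral.integral_congr
    intro t ht
    rw [Set.uIcc_of_le hx.1] at ht
    simp only [hqt t ⟨ht.1, ht.2.trans hx.2⟩]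
  intro ε hε
  obtain ⟨K, hK, h⟩ := gl_core ℓ hℓ p qt Q (q 0) hp (fun _ => rfl) (fun _ => rfl) c hccont hc2 ε hε
  refine ⟨K, hK, fun k hk x hx => ?_⟩
  have := h k hk x hx
  rw [hqt x hx, hqt 0 (Set.left_mem_Icc.2 hℓ.le), hQ x hx] at this
  exact this
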